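/- The Bregman subgradient projector Q_s is quasi Bregman nonexpansive (i.e. D(x, Q_s(y)) ≤ D(x, y) for every x with g(x) ≤ 0 and every y ∈ X) and its fixed point set is Fix Q_s = lev_{≤0} g. -/

import Mathlib

/-!
Strict convexity makes `D` positive off the diagonal: restricting `f` to a line gives the gradient
inequality `0 ≤ D x y`, and evaluating at the midpoint of `x` and `y` makes it strict.

If `g p ≤ 0`, the subgradient inequality puts `p` in the half-space `H` at `y`. With `q = Q y` the
minimiser of `D(·, y)` on the convex set `H`, the first-order condition in the direction `p - q`
reads `0 ≤ ⟪f' q - f' y, p - q⟫`. The three-point identity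
`D p y = D p q + D q y + ⟪f' q - f' y, p - q⟫` then gives `D p q ≤ D p y`.

For the fixed points, `Q z = z` means `z ∈ H`, which says exactly `g z ≤ 0`. Conversely, if
`g z ≤ 0` then `z ∈ H`, so `D (Q z) z ≤ D z z = 0`, and strict positivity forces `Q z = z`.
-/

open scoped RealInnerProductSpace
open Filter Topology

lemma gradient_inequality {X : Type*} [NormedAddCommGroup X] [InnerProductSpace ℝ X]
    [CompleteSpace X] {f : X → ℝ} {v y : X} (hf : ConvexOn ℝ Set.univ f)
    (hv : HasGradientAt f v y) (x : X) : ⟪v, x - y⟫ ≤ f x - f y := by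
  have hc : ConvexOn ℝ Set.univ (f ∘ AffineMap.lineMap (k := ℝ) y x) := by
    simpa using hf.comp_affineMap (AffineMap.lineMap (k := ℝ) y x)
  have hd : HasDerivAt (f ∘ AffineMap.lineMap (k := ℝ) y x) ⟪v, x - y⟫ 0 := by
    have h1 : HasDerivAt (AffineMap.lineMap (k := ℝ) y x) (x - y) (0 : ℝ) :=
      AffineMap.hasDerivAt_lineMap
    have h2 : HasFDerivAt f (InnerProductSpace.toDual ℝ X v)
        (AffineMap.lineMap (k := ℝ) y x (0 : ℝ)) := by
      simpa using hv.hasFDerivAt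
    simpa using h2.comp_hasDerivAt (0 : ℝ) h1
  have := hc.le_slope_of_hasDerivAt (Set.mem_univ (0 : ℝ)) (Set.mem_univ 1) zero_lt_one hd
  simpa [slope] using this

lemma gradient_inequality_strict {X : Type*} [NormedAddCommGroup X] [InnerProductSpace ℝ X]
    [CompleteSpace X] {f : X → ℝ} {v y : X} (hf : StrictConvexOn ℝ Set.univ f)
    (hv : HasGradientAt f v y) {x : X} (hxy : x ≠ y) : ⟪v, x - y⟫ < f x - f y := by
  have h1 := hf.2 (Set.mem_univ x) (Set.mem_univ y) hxy (one_half_pos (α := ℝ))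
    (one_half_pos (α := ℝ)) (add_halves 1)
  have h2 := gradient_inequality hf.convexOn hv ((1 / 2 : ℝ) • x + (1 / 2 : ℝ) • y)
  have h3 : (1 / 2 : ℝ) • x + (1 / 2 : ℝ) • y - y = (1 / 2 : ℝ) • (x - y) := by module
  rw [h3, inner_smul_right] at h2
  simp only [smul_eq_mul] at h1
  linarith

/-- First-order optimality condition for minimising `D(·, y)` over a convex set. -/
lemma first_order_condition {X : Type*} [NormedAddCommGroup X] [InnerProductSpace ℝ X]
    [CompleteSpace X] {f : X → ℝ} {u v q p : X} {S : Set X} (hS : Convex ℝ S)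
    (hu : HasGradientAt f u q) (hq : q ∈ S) (hp : p ∈ S)
    (hmin : ∀ c ∈ S, f q - ⟪v, q⟫ ≤ f c - ⟪v, c⟫) : 0 ≤ ⟪u - v, p - q⟫ := by
  have hd : HasFDerivAt (fun c => f c - ⟪v, c⟫)
      (InnerProductSpace.toDual ℝ X u - innerSL ℝ v) q :=
    hu.hasFDerivAt.sub (innerSL ℝ v).hasFDerivAt
  have hm : IsLocalMinOn (fun c => f c - ⟪v, c⟫) S q :=
    (isMinOn_iff.2 hmin).localize
  have := hm.hasFDerivWithinAt_nonneg hd.hasFDerivWithinAt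
    (sub_mem_posTangentConeAt_of_segment_subset (hS.segment_subset hq hp))
  simpa [inner_sub_left] using this


/-- The Bregman subgradient projector `Q_s` is quasi Bregman nonexpansive
(`D(x, Q_s(y)) ≤ D(x,y)` whenever `g(x) ≤ 0`) and `Fix Q_s = lev_{≤0} g`. -/
theorem bregman_subgradient_projector_qbne_fix
    {X : Type*} [NormedAddCommGroup X] [InnerProductSpace ℝ X] [FiniteDimensional ℝ X]
    (f : X → ℝ) (f' : X → X)
    (hf : StrictConvexOn ℝ Set.univ f)
    (hf' : ∀ x, HasGradientAt f (f' x) x)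
    (D : X → X → ℝ)
    (hD : ∀ x y, D x y = f x - f y - ⟪f' y, x - y⟫)
    (g : X → ℝ) (hgcont : Continuous g) (hgcv : ConvexOn ℝ Set.univ g)
    (hlev : {x : X | g x ≤ 0}.Nonempty)
    (s : X → X) (hs : ∀ z w, g z + ⟪s z, w - z⟫ ≤ g w)
    (Q : X → X)
    (hQ : ∀ z, Q z ∈ {x : X | g z + ⟪s z, x - z⟫ ≤ 0} ∧
      ∀ c ∈ {x : X | g z + ⟪s z, x - z⟫ ≤ 0}, D (Q z) z ≤ D c z) :
    (∀ p, g p ≤ 0 → ∀ y, D p (Q y) ≤ D p y) ∧ {z : X | Q z = z} = {x : X | g x ≤ 0} := by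
  have hmem : ∀ p, g p ≤ 0 → ∀ y, g y + ⟪s y, p - y⟫ ≤ 0 := fun p hp y => (hs y p).trans hp
  have hpos : ∀ x y, 0 ≤ D x y := fun x y => by
    rw [hD]
    linarith [gradient_inequality hf.convexOn (hf' y) x]
  refine ⟨fun p hp y => ?_, Set.ext fun z => ⟨fun hz => ?_, fun hz => ?_⟩⟩
  · obtain ⟨hq, hmin⟩ := hQ y
    have hconv : Convex ℝ {x : X | g y + ⟪s y, x - y⟫ ≤ 0} := by
      have : {x : X | g y + ⟪s y, x - y⟫ ≤ 0} = {x : X | ⟪s y, x⟫ ≤ ⟪s y, y⟫ - g y} := by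
        ext x
        simp only [Set.mem_ofPred_eq, inner_sub_right]
        constructor <;> intro h <;> linarith
      rw [this]
      exact convex_halfSpace_le (innerSL ℝ (s y)).isLinear _
    have key := first_order_condition (v := f' y) hconv (hf' (Q y)) hq (hmem p hp y)
      fun c hc => by
        have := hmin c hc
        simp only [hD, inner_sub_right] at this
        linarith
    have h0 := hpos (Q y) y
    simp only [hD, inner_sub_left, inner_sub_right] at key h0 ⊢
    linarith
  · have h := (hQ z).1
    rw [Set.mem_ofPred_eq] at hz
    simpa [hz] using h
  · by_contra hne
    have h1 := (hQ z).2 z (hmem z hz z)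
    have h2 := gradient_inequality_strict hf (hf' z) hne
    simp only [hD, sub_self, inner_zero_right] at h1
    linarith
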